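/- If a finite set Φ of CPL₀ labelled sequents is ⇝-normal (no set-decomposition step applies to it), then every sequent in Φ is valid if and only if every sequent in Φ is derivable in the proof system for CPL₀. -/

import Mathlib

open MeasureTheory

/-- The Cantor space `2^ω` of infinite binary sequences. -/
abbrev Cantor : Type := ℕ → Bool

/-- Rational numbers in the unit interval `[0,1]`. -/
abbrev I01 : Type := (Set.Icc (0 : ℚ) 1)

/-- The value of a rational `q ∈ [0,1]` as an extended nonnegative real. -/
noncomputable def qq (q : I01) : ENNReal := ENNReal.ofReal (q.1 : ℝ)

/-- `μ` is the fair-coin Bernoulli (uniform) product measure on the Cantor space: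
it is a probability measure giving each cylinder fixing the values on a finite set `s`
of coordinates the measure `2^{-|s|}`. -/
def IsCantorMeasure (μ : Measure Cantor) : Prop :=
  IsProbabilityMeasure μ ∧
    ∀ (s : Finset ℕ) (v : ℕ → Bool),
      μ {f : Cantor | ∀ i ∈ s, f i = v i} = (2 : ENNReal)⁻¹ ^ s.card

/-- Boolean formulas `b ::= xᵢ | ⊤ | ⊥ | ¬b | b ∧ c | b ∨ c`. -/
inductive BF : Type where
  | var : ℕ → BF
  | tt : BF
  | ff : BF
  | neg : BF → BF
  | conj : BF → BF → BF
  | disj : BF → BF → BF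
deriving DecidableEq

/-- The interpretation `⟦b⟧ ⊆ 2^ω` of a Boolean formula. -/
def BF.sem : BF → Set Cantor
  | .var i => {f | f i = true}
  | .tt => Set.univ
  | .ff => ∅
  | .neg b => (BF.sem b)ᶜ
  | .conj b c => BF.sem b ∩ BF.sem c
  | .disj b c => BF.sem b ∪ BF.sem c

/-- Formulas of univariate counting propositional logic CPL₀:
`A ::= i | ¬A | A ∧ B | A ∨ B | C^q A | D^q A` with `q` a rational in `[0,1]`. -/
inductive CPL0 : Type where
  | atom : ℕ → CPL0
  | neg : CPL0 → CPL0
  | conj : CPL0 → CPL0 → CPL0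
  | disj : CPL0 → CPL0 → CPL0
  | cnt : I01 → CPL0 → CPL0
  | dnt : I01 → CPL0 → CPL0
deriving DecidableEq

open scoped Classical in
/-- The interpretation `⟦A⟧ ⊆ 2^ω` of a CPL₀ formula (relative to the measure `μ`). -/
noncomputable def CPL0.sem (μ : Measure Cantor) : CPL0 → Set Cantor
  | .atom i => {f | f i = true}
  | .neg A => (CPL0.sem μ A)ᶜ
  | .conj A B => CPL0.sem μ A ∩ CPL0.sem μ B
  | .disj A B => CPL0.sem μ A ∪ CPL0.sem μ B
  | .cnt q A => if qq q ≤ μ (CPL0.sem μ A) then Set.univ else ∅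
  | .dnt q A => if μ (CPL0.sem μ A) < qq q then Set.univ else ∅

/-- Labelled formulas: `b ↣ A` (`fwd`) and `b ↢ A` (`bwd`). -/
inductive LF : Type where
  | fwd : BF → CPL0 → LF
  | bwd : BF → CPL0 → LF
deriving DecidableEq

/-- Validity of a labelled formula: `b ↣ A` is valid when `⟦b⟧ ⊆ ⟦A⟧`,
and `b ↢ A` is valid when `⟦A⟧ ⊆ ⟦b⟧`. -/
def LF.valid (μ : Measure Cantor) : LF → Prop
  | .fwd b A => BF.sem b ⊆ CPL0.sem μ A
  | .bwd b A => CPL0.sem μ A ⊆ BF.sem b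

/-- The labelled, one-sided, single-succedent sequent calculus for CPL₀:
`Der μ L` means that the sequent `⊢ L` is derivable. -/
inductive Der (μ : Measure Cantor) : LF → Prop where
  | ax1 {b : BF} {n : ℕ} :
      BF.sem b ⊆ BF.sem (.var n) → Der μ (.fwd b (.atom n))
  | ax2 {b : BF} {n : ℕ} :
      BF.sem (.var n) ⊆ BF.sem b → Der μ (.bwd b (.atom n))
  | runion {b c d : BF} {A : CPL0} :
      Der μ (.fwd c A) → Der μ (.fwd d A) →
      BF.sem b ⊆ BF.sem (.disj c d) → Der μ (.fwd b A)
  | rinter {b c d : BF} {A : CPL0} :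
      Der μ (.bwd c A) → Der μ (.bwd d A) →
      BF.sem (.conj c d) ⊆ BF.sem b → Der μ (.bwd b A)
  | negF {b c : BF} {A : CPL0} :
      Der μ (.bwd c A) → BF.sem b ⊆ BF.sem (.neg c) → Der μ (.fwd b (.neg A))
  | negB {b c : BF} {A : CPL0} :
      Der μ (.fwd c A) → BF.sem (.neg c) ⊆ BF.sem b → Der μ (.bwd b (.neg A))
  | disjF1 {b : BF} {A B : CPL0} :
      Der μ (.fwd b A) → Der μ (.fwd b (.disj A B))
  | disjF2 {b : BF} {A B : CPL0} :
      Der μ (.fwd b B) → Der μ (.fwd b (.disj A B))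
  | disjB {b : BF} {A B : CPL0} :
      Der μ (.bwd b A) → Der μ (.bwd b B) → Der μ (.bwd b (.disj A B))
  | conjF {b : BF} {A B : CPL0} :
      Der μ (.fwd b A) → Der μ (.fwd b B) → Der μ (.fwd b (.conj A B))
  | conjB1 {b : BF} {A B : CPL0} :
      Der μ (.bwd b A) → Der μ (.bwd b (.conj A B))
  | conjB2 {b : BF} {A B : CPL0} :
      Der μ (.bwd b B) → Der μ (.bwd b (.conj A B))
  | muF {b : BF} {A : CPL0} :
      μ (BF.sem b) = 0 → Der μ (.fwd b A)
  | muB {b : BF} {A : CPL0} :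
      μ (BF.sem b) = 1 → Der μ (.bwd b A)
  | cntF {b c : BF} {q : I01} {A : CPL0} :
      Der μ (.fwd c A) → qq q ≤ μ (BF.sem c) → Der μ (.fwd b (.cnt q A))
  | cntB {b c : BF} {q : I01} {A : CPL0} :
      Der μ (.bwd c A) → μ (BF.sem c) < qq q → Der μ (.bwd b (.cnt q A))
  | dntF {b c : BF} {q : I01} {A : CPL0} :
      Der μ (.bwd c A) → μ (BF.sem c) < qq q → Der μ (.fwd b (.dnt q A))
  | dntB {b c : BF} {q : I01} {A : CPL0} :
      Der μ (.fwd c A) → qq q ≤ μ (BF.sem c) → Der μ (.bwd b (.dnt q A))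

/-- Sequents: either a labelled formula `⊢ L`, or the falsum sequent `⊢ ⊥`. -/
inductive Sequent : Type where
  | lf : LF → Sequent
  | falsum : Sequent
deriving DecidableEq

/-- Validity of a sequent: the falsum sequent `⊢ ⊥` is never valid. -/
def Sequent.valid (μ : Measure Cantor) : Sequent → Prop
  | .lf L => L.valid μ
  | .falsum => False

/-- Derivability of a sequent: the falsum sequent `⊢ ⊥` is never derivable. -/
def Sequent.der (μ : Measure Cantor) : Sequent → Prop
  | .lf L => Der μ L
  | .falsum => False

/-- The one-step decomposition rewriting relation `⇝₀` from a sequent to a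
finite set of sequents. -/
inductive Dec0 (μ : Measure Cantor) : Sequent → Finset Sequent → Prop where
  | negF {b c : BF} {A : CPL0} :
      BF.sem b ⊆ BF.sem (.neg c) →
      Dec0 μ (.lf (.fwd b (.neg A))) {Sequent.lf (.bwd c A)}
  | negB {b c : BF} {A : CPL0} :
      BF.sem (.neg c) ⊆ BF.sem b →
      Dec0 μ (.lf (.bwd b (.neg A))) {Sequent.lf (.fwd c A)}
  | disjF {b c d : BF} {A B : CPL0} :
      BF.sem b ⊆ BF.sem (.disj c d) →
      Dec0 μ (.lf (.fwd b (.disj A B))) {Sequent.lf (.fwd c A), Sequent.lf (.fwd d B)}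
  | disjB {b : BF} {A B : CPL0} :
      Dec0 μ (.lf (.bwd b (.disj A B))) {Sequent.lf (.bwd b A), Sequent.lf (.bwd b B)}
  | conjF {b : BF} {A B : CPL0} :
      Dec0 μ (.lf (.fwd b (.conj A B))) {Sequent.lf (.fwd b A), Sequent.lf (.fwd b B)}
  | conjB {b c d : BF} {A B : CPL0} :
      BF.sem (.conj c d) ⊆ BF.sem b →
      Dec0 μ (.lf (.bwd b (.conj A B))) {Sequent.lf (.bwd c A), Sequent.lf (.bwd d B)}
  | cntF {b c : BF} {q : I01} {A : CPL0} :
      qq q ≤ μ (BF.sem c) →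
      Dec0 μ (.lf (.fwd b (.cnt q A))) {Sequent.lf (.fwd c A)}
  | cntB {b c : BF} {q : I01} {A : CPL0} :
      μ (BF.sem c) < qq q →
      Dec0 μ (.lf (.bwd b (.cnt q A))) {Sequent.lf (.bwd c A)}
  | dntF {b c : BF} {q : I01} {A : CPL0} :
      μ (BF.sem c) < qq q →
      Dec0 μ (.lf (.fwd b (.dnt q A))) {Sequent.lf (.bwd c A)}
  | dntB {b c : BF} {q : I01} {A : CPL0} :
      qq q ≤ μ (BF.sem c) →
      Dec0 μ (.lf (.bwd b (.dnt q A))) {Sequent.lf (.fwd c A)}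
  | muF {b : BF} {A : CPL0} :
      μ (BF.sem b) = 0 → Dec0 μ (.lf (.fwd b A)) ∅
  | muB {b : BF} {A : CPL0} :
      μ (BF.sem b) = 1 → Dec0 μ (.lf (.bwd b A)) ∅
  | dnt0 {b : BF} {A : CPL0} :
      μ (BF.sem b) ≠ 0 → Dec0 μ (.lf (.fwd b (.dnt 0 A))) {Sequent.falsum}
  | cnt0 {b : BF} {A : CPL0} :
      μ (BF.sem b) ≠ 1 → Dec0 μ (.lf (.bwd b (.cnt 0 A))) {Sequent.falsum}

/-- The set-decomposition relation `⇝` on finite sets of sequents: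
`Φ ⇝ Ψ` when `Φ = Φ' ∪ {⊢ L}`, `⊢ L ⇝₀ Ψ'` and `Ψ = Φ' ∪ Ψ'`. -/
def Dec (μ : Measure Cantor) (Φ Ψ : Finset Sequent) : Prop :=
  ∃ (Φ' Ψ' : Finset Sequent) (s : Sequent),
    Dec0 μ s Ψ' ∧ Φ = insert s Φ' ∧ Ψ = Φ' ∪ Ψ'

/-- A finite set of sequents is `⇝`-normal when no decomposition step applies to it. -/
def DecNormal (μ : Measure Cantor) (Φ : Finset Sequent) : Prop :=
  ¬ ∃ Ψ : Finset Sequent, Dec μ Φ Ψ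

/-!
No compound formula occurs in a `⇝`-normal set: propositional connectives always decompose, and
counting quantifiers decompose with the witness `⊤` or `⊥`, except that `b ↢ C⁰A` and `b ↣ D⁰A`
admit no witness; there either a measure rule or the step to `⊢ ⊥` applies. On atoms, validity is
exactly the premise of Ax1 or Ax2, so it implies derivability. The converse is soundness, whose
only delicate rules are the `μ`-rules: `⟦b⟧` is clopen and `μ` has full support, so measure `0`
forces `⟦b⟧ = ∅` and measure `1` forces `⟦b⟧ = 2^ω`.
-/

theorem IsCantorMeasure.isOpenPosMeasure {μ : Measure Cantor} (hμ : IsCantorMeasure μ) :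
    μ.IsOpenPosMeasure where
  open_pos U hU := by
    rintro ⟨f, hf⟩ hUμ
    obtain ⟨s, V, hV, hVU⟩ := isOpen_pi_iff.mp hU f hf
    have cylinder_subset : {g : Cantor | ∀ i ∈ s, g i = f i} ⊆ U := fun g hg =>
      hVU fun i hi => (hg i hi).symm ▸ (hV i hi).2
    have cylinder_null := measure_mono_null cylinder_subset hUμ
    rw [hμ.2] at cylinder_null
    exact pow_ne_zero _ (ENNReal.inv_ne_zero.mpr ENNReal.ofNat_ne_top) cylinder_null

theorem BF.isClopen_sem (b : BF) : IsClopen b.sem := by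
  induction b with
  | var n => exact (isClopen_discrete {true}).preimage (continuous_apply n)
  | tt => exact isClopen_univ
  | ff => exact isClopen_empty
  | neg b ih => exact ih.compl
  | conj b c ihb ihc => exact ihb.inter ihc
  | disj b c ihb ihc => exact ihb.union ihc

theorem BF.measure_sem_eq_zero_iff {μ : Measure Cantor} [μ.IsOpenPosMeasure] {b : BF} :
    μ b.sem = 0 ↔ b.sem = ∅ :=
  b.isClopen_sem.isOpen.measure_eq_zero_iff μ

theorem BF.measure_sem_eq_one_iff {μ : Measure Cantor} [IsProbabilityMeasure μ]
    [μ.IsOpenPosMeasure] {b : BF} : μ b.sem = 1 ↔ b.sem = Set.univ :=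
  b.isClopen_sem.isClosed.measure_eq_one_iff_eq_univ

theorem qq_le_one (q : I01) : qq q ≤ 1 :=
  ENNReal.ofReal_le_one.mpr (mod_cast q.2.2)

theorem qq_pos {q : I01} (hq : q ≠ 0) : 0 < qq q :=
  ENNReal.ofReal_pos.mpr (mod_cast lt_of_le_of_ne q.2.1 (Subtype.coe_ne_coe.mpr hq.symm))

namespace CPL0

variable {μ : Measure Cantor} {q : I01} {A : CPL0}

theorem sem_cnt_of_le (h : qq q ≤ μ (A.sem μ)) : (cnt q A).sem μ = Set.univ := if_pos h

theorem sem_cnt_of_lt (h : μ (A.sem μ) < qq q) : (cnt q A).sem μ = ∅ := if_neg h.not_ge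

theorem sem_dnt_of_lt (h : μ (A.sem μ) < qq q) : (dnt q A).sem μ = Set.univ := if_pos h

theorem sem_dnt_of_le (h : qq q ≤ μ (A.sem μ)) : (dnt q A).sem μ = ∅ := if_neg h.not_gt

end CPL0

theorem Der.valid {μ : Measure Cantor} [IsProbabilityMeasure μ] [μ.IsOpenPosMeasure] {L : LF}
    (h : Der μ L) : L.valid μ := by
  induction h with
  | ax1 h | ax2 h => exact h
  | runion _ _ h ihc ihd => exact h.trans (Set.union_subset ihc ihd)
  | rinter _ _ h ihc ihd => exact (Set.subset_inter ihc ihd).trans h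
  | negF _ h ih => exact h.trans (Set.compl_subset_compl.mpr ih)
  | negB _ h ih => exact (Set.compl_subset_compl.mpr ih).trans h
  | disjF1 _ ih => exact ih.trans Set.subset_union_left
  | disjF2 _ ih => exact ih.trans Set.subset_union_right
  | disjB _ _ ihA ihB => exact Set.union_subset ihA ihB
  | conjF _ _ ihA ihB => exact Set.subset_inter ihA ihB
  | conjB1 _ ih => exact Set.inter_subset_left.trans ih
  | conjB2 _ ih => exact Set.inter_subset_right.trans ih
  | muF h => exact (BF.measure_sem_eq_zero_iff.mp h).trans_subset (Set.empty_subset _)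
  | muB h => exact (Set.subset_univ _).trans_eq (BF.measure_sem_eq_one_iff.mp h).symm
  | cntF _ h ih =>
    exact (Set.subset_univ _).trans_eq (CPL0.sem_cnt_of_le (h.trans (measure_mono ih))).symm
  | cntB _ h ih =>
    exact (CPL0.sem_cnt_of_lt ((measure_mono ih).trans_lt h)).trans_subset (Set.empty_subset _)
  | dntF _ h ih =>
    exact (Set.subset_univ _).trans_eq (CPL0.sem_dnt_of_lt ((measure_mono ih).trans_lt h)).symm
  | dntB _ h ih =>
    exact (CPL0.sem_dnt_of_le (h.trans (measure_mono ih))).trans_subset (Set.empty_subset _)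

section Atoms

variable {μ : Measure Cantor} [IsProbabilityMeasure μ] [μ.IsOpenPosMeasure] {b : BF} {n : ℕ}

theorem valid_fwd_atom_iff_der :
    (LF.fwd b (.atom n)).valid μ ↔ Der μ (.fwd b (.atom n)) :=
  ⟨.ax1, Der.valid⟩

theorem valid_bwd_atom_iff_der :
    (LF.bwd b (.atom n)).valid μ ↔ Der μ (.bwd b (.atom n)) :=
  ⟨.ax2, Der.valid⟩

end Atoms

namespace Dec0

variable {μ : Measure Cantor} (b : BF) (q : I01) (A : CPL0)

theorem exists_fwd_cnt [IsProbabilityMeasure μ] : ∃ Ψ, Dec0 μ (.lf (.fwd b (.cnt q A))) Ψ :=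
  ⟨_, cntF (c := .tt) ((qq_le_one q).trans_eq measure_univ.symm)⟩

theorem exists_bwd_dnt [IsProbabilityMeasure μ] : ∃ Ψ, Dec0 μ (.lf (.bwd b (.dnt q A))) Ψ :=
  ⟨_, dntB (c := .tt) ((qq_le_one q).trans_eq measure_univ.symm)⟩

theorem exists_bwd_cnt : ∃ Ψ, Dec0 μ (.lf (.bwd b (.cnt q A))) Ψ := by
  obtain rfl | hq := eq_or_ne q 0
  · by_cases hb : μ b.sem = 1
    · exact ⟨_, muB hb⟩
    · exact ⟨_, cnt0 hb⟩
  · exact ⟨_, cntB (c := .ff) (measure_empty.trans_lt (qq_pos hq))⟩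

theorem exists_fwd_dnt : ∃ Ψ, Dec0 μ (.lf (.fwd b (.dnt q A))) Ψ := by
  obtain rfl | hq := eq_or_ne q 0
  · by_cases hb : μ b.sem = 0
    · exact ⟨_, muF hb⟩
    · exact ⟨_, dnt0 hb⟩
  · exact ⟨_, dntF (c := .ff) (measure_empty.trans_lt (qq_pos hq))⟩

variable [IsProbabilityMeasure μ] {A}

theorem exists_fwd_of_ne_atom (hA : ∀ n, A ≠ .atom n) : ∃ Ψ, Dec0 μ (.lf (.fwd b A)) Ψ := by
  cases A with
  | atom n => exact absurd rfl (hA n)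
  | neg A => exact ⟨_, negF (c := .neg b) (compl_compl b.sem).ge⟩
  | conj A B => exact ⟨_, conjF⟩
  | disj A B => exact ⟨_, disjF (c := b) (d := b) Set.subset_union_left⟩
  | cnt q A => exact exists_fwd_cnt b q A
  | dnt q A => exact exists_fwd_dnt b q A

theorem exists_bwd_of_ne_atom (hA : ∀ n, A ≠ .atom n) : ∃ Ψ, Dec0 μ (.lf (.bwd b A)) Ψ := by
  cases A with
  | atom n => exact absurd rfl (hA n)
  | neg A => exact ⟨_, negB (c := .neg b) (compl_compl b.sem).le⟩
  | conj A B => exact ⟨_, conjB (c := b) (d := b) Set.inter_subset_left⟩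
  | disj A B => exact ⟨_, disjB⟩
  | cnt q A => exact exists_bwd_cnt b q A
  | dnt q A => exact exists_bwd_dnt b q A

end Dec0

/-- A single sequent is `⇝₀`-normal when no decomposition step applies to it. -/
def Sequent.IsNormal (μ : Measure Cantor) (s : Sequent) : Prop :=
  ¬ ∃ Ψ : Finset Sequent, Dec0 μ s Ψ

theorem decNormal_iff_forall_isNormal {μ : Measure Cantor} {Φ : Finset Sequent} :
    DecNormal μ Φ ↔ ∀ s ∈ Φ, s.IsNormal μ := by
  constructor
  · rintro hΦ s hs ⟨Ψ, hsΨ⟩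
    exact hΦ ⟨Φ ∪ Ψ, Φ, Ψ, s, hsΨ, (Finset.insert_eq_of_mem hs).symm, rfl⟩
  · rintro hΦ ⟨_, Φ', Ψ, s, hsΨ, rfl, rfl⟩
    exact hΦ s (Finset.mem_insert_self s Φ') ⟨Ψ, hsΨ⟩

namespace Sequent.IsNormal

variable {μ : Measure Cantor} [IsProbabilityMeasure μ]

theorem exists_eq_atom_of_fwd {b : BF} {A : CPL0} (h : IsNormal μ (.lf (.fwd b A))) :
    ∃ n, A = .atom n := by
  by_contra! hA
  exact h (Dec0.exists_fwd_of_ne_atom b hA)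

theorem exists_eq_atom_of_bwd {b : BF} {A : CPL0} (h : IsNormal μ (.lf (.bwd b A))) :
    ∃ n, A = .atom n := by
  by_contra! hA
  exact h (Dec0.exists_bwd_of_ne_atom b hA)

theorem valid_iff_der [μ.IsOpenPosMeasure] {s : Sequent} (hs : s.IsNormal μ) :
    s.valid μ ↔ s.der μ := by
  obtain (⟨b, A⟩ | ⟨b, A⟩) | _ := s
  · obtain ⟨n, rfl⟩ := hs.exists_eq_atom_of_fwd
    exact valid_fwd_atom_iff_der
  · obtain ⟨n, rfl⟩ := hs.exists_eq_atom_of_bwd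
    exact valid_bwd_atom_iff_der
  · exact Iff.rfl

end Sequent.IsNormal

theorem cpl0_normal_valid_iff_derivable_general
    (μ : Measure Cantor) [IsProbabilityMeasure μ] [μ.IsOpenPosMeasure]
    (Φ : Finset Sequent) (hΦ : DecNormal μ Φ) :
    (∀ s ∈ Φ, s.valid μ) ↔ (∀ s ∈ Φ, s.der μ) :=
  forall₂_congr fun s hs => (decNormal_iff_forall_isNormal.mp hΦ s hs).valid_iff_der

/-- If a finite set `Φ` of CPL₀ labelled sequents is `⇝`-normal,
then every sequent in `Φ` is valid if and only if every sequent in `Φ` is derivable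
in the proof system for CPL₀. -/
theorem cpl0_normal_valid_iff_derivable
    (μ : Measure Cantor) (hμ : IsCantorMeasure μ)
    (Φ : Finset Sequent) (hΦ : DecNormal μ Φ) :
    (∀ s ∈ Φ, s.valid μ) ↔ (∀ s ∈ Φ, s.der μ) :=
  have := hμ.1
  have := hμ.isOpenPosMeasure
  cpl0_normal_valid_iff_derivable_general μ Φ hΦ
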